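/- Let G be a group and π a set of primes. Let A and B be ℤG-modules, and for each n ≥ 0 regard Tor_n^ℤ(A,B) as a ℤG-module via the diagonal G-action. If A and B belong to the class 𝔠(G,π), then Tor_n^ℤ(A,B) belongs to 𝔠(G,π) for all n ≥ 0. -/

import Mathlib

/-!
Statement 14: the class 𝔠(G, π) is closed under torsion products over ℤ.
Here Tor_n^ℤ(A, B), regarded as a ℤG-module via the diagonal G-action, is the
Tor object of the monoidal abelian category Rep ℤ G (whose monoidal structure is
the tensor product over ℤ with the diagonal action; since projective objects of
Rep ℤ G are flat over ℤ, this left-derived tensor product computes Tor over ℤ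
with the diagonal action).
-/

open CategoryTheory

noncomputable section




/-- The rational circle `ℚ/ℤ`. -/
abbrev RatCircle : Type := ℚ ⧸ AddSubgroup.zmultiples (1 : ℚ)

/-- The quasicyclic (Prüfer) `p`-group, realized as the `p`-primary part of `ℚ/ℤ`. -/
def pruferSubgroup (p : ℕ) : AddSubgroup RatCircle where
  carrier := {x | ∃ n : ℕ, (p ^ n : ℕ) • x = 0}
  zero_mem' := ⟨0, smul_zero _⟩
  add_mem' := by
    rintro a b ⟨m, hm⟩ ⟨n, hn⟩
    refine ⟨m + n, ?_⟩
    have ha : (p ^ m * p ^ n) • a = 0 := by rw [mul_comm, mul_smul, hm, smul_zero]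
    have hb : (p ^ m * p ^ n) • b = 0 := by rw [mul_smul, hn, smul_zero]
    rw [smul_add, pow_add, ha, hb, add_zero]
  neg_mem' := by
    rintro a ⟨m, hm⟩
    exact ⟨m, by rw [smul_neg, hm, neg_zero]⟩

/-- A group has a quasicyclic `p`-section if some quotient of a subgroup is
isomorphic to the Prüfer `p`-group. -/
def HasQuasicyclicSection (G : Type*) [Group G] (p : ℕ) : Prop :=
  ∃ (H : Subgroup G) (K : Subgroup H) (_ : K.Normal),
    Nonempty ((H ⧸ K) ≃* Multiplicative (pruferSubgroup p))

/-- The spectrum of a group: the set of primes `p` such that the group has a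
section isomorphic to the quasicyclic `p`-group. -/
def groupSpectrum (G : Type*) [Group G] : Set ℕ :=
  {p | p.Prime ∧ HasQuasicyclicSection G p}

/-- The spectrum of an (additive) abelian group, via `Multiplicative`. -/
abbrev addSpectrum (A : Type*) [AddGroup A] : Set ℕ :=
  groupSpectrum (Multiplicative A)

/-- An abelian group has finite rank if its torsion-free rank and all of its
`p`-ranks are finite. -/
def FiniteRankAbelian (A : Type*) [AddCommGroup A] : Prop :=
  (∃ n : ℕ, ∀ k : ℕ, (∃ f : (Fin k →₀ ℤ) →+ A, Function.Injective f) → k ≤ n) ∧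
  ∀ p : ℕ, p.Prime → {a : A | (p : ℕ) • a = 0}.Finite

/-- A group has finite rank (in the sense appropriate for abelian groups:
finite torsion-free rank and finite `p`-ranks). -/
def FiniteRankGroup (G : Type*) [Group G] : Prop :=
  (∃ n : ℕ, ∀ k : ℕ,
    (∃ f : Multiplicative (Fin k →₀ ℤ) →* G, Function.Injective f) → k ≤ n) ∧
  ∀ p : ℕ, p.Prime → {g : G | g ^ p = 1}.Finite

/-- A solvable group of finite rank: a solvable group all of whose abelian
sections have finite rank. -/
def SolvableOfFiniteRank (G : Type*) [Group G] : Prop :=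
  IsSolvable G ∧
    ∀ (H : Subgroup G) (K : Subgroup H) (_ : K.Normal),
      (∀ x y : H ⧸ K, x * y = y * x) → FiniteRankGroup (H ⧸ K)

/-- A group is virtually abelian. -/
def VirtuallyAbelian (G : Type*) [Group G] : Prop :=
  ∃ H : Subgroup G, H.index ≠ 0 ∧ ∀ x y : H, x * y = y * x

/-- A `ℤG`-module (given as an object of `Rep ℤ G`) whose underlying abelian group
is torsion-free, of finite rank, and `π`-spectral. -/
def NiceRep {G : Type} [Group G] (π : Set ℕ) (M : Rep.{0} ℤ G) : Prop :=
  (∀ g : M, g ≠ 0 → ¬IsOfFinAddOrder g) ∧ FiniteRankAbelian M ∧ addSpectrum M ⊆ π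

/-- The class `𝒰` of solvable groups of finite rank. -/
def MemClassU (G : Type) [Group G] : Prop :=
  SolvableOfFiniteRank G ∧
  ∃ (N : Subgroup G) (_ : N.Normal),
    Group.IsNilpotent N ∧
    Group.FG (G ⧸ N) ∧ VirtuallyAbelian (G ⧸ N) ∧
    ∃ (r : ℕ) (T : Fin (r + 1) → Subgroup G),
      Monotone T ∧ T 0 = ⊥ ∧
      ((T (Fin.last r) : Set G) = {g : G | g ∈ N ∧ IsOfFinOrder g}) ∧
      (∀ (i : Fin (r + 1)) (g t : G), t ∈ T i → g * t * g⁻¹ ∈ T i) ∧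
      (∀ (i : Fin r) (n t : G), n ∈ N → t ∈ T i.succ →
        n * t * n⁻¹ * t⁻¹ ∈ T i.castSucc) ∧
      (∀ i : Fin r, (T i.castSucc).relIndex (T i.succ) = 0 →
        ∃ M : Rep ℤ (G ⧸ N), NiceRep (groupSpectrum G) M ∧
          ∃ φ : M → G,
            (∀ m : M, φ m ∈ T i.succ) ∧
            (∀ m m' : M, (φ (m + m'))⁻¹ * (φ m * φ m') ∈ T i.castSucc) ∧
            (∀ t : G, t ∈ T i.succ → ∃ m : M, (φ m)⁻¹ * t ∈ T i.castSucc) ∧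
            (∀ (g : G) (m : M),
              (φ (M.ρ (QuotientGroup.mk g) m))⁻¹ * (g * φ m * g⁻¹) ∈ T i.castSucc))

/-- The class `𝔠(G, π)`: the smallest class of `ℤG`-modules containing every
finite `ℤG`-module and every `ℤG`-module whose underlying abelian group is
torsion-free of finite rank and `π`-spectral, and closed under forming
`ℤG`-module quotients and extensions. -/
inductive MemC (G : Type) [Group G] (π : Set ℕ) : Rep ℤ G → Prop
  | of_finite (A : Rep ℤ G) (h : Finite (A : Type)) : MemC G π A
  | of_nice (A : Rep ℤ G) (h : NiceRep π A) : MemC G π A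
  | quot (A B : Rep ℤ G) (f : A ⟶ B) (hf : Function.Surjective f.hom)
      (hA : MemC G π A) : MemC G π B
  | ext (A B C : Rep ℤ G) (f : A ⟶ B) (g : B ⟶ C)
      (hinj : Function.Injective f.hom) (hsurj : Function.Surjective g.hom)
      (hexact : ∀ b : (B : Type), g.hom b = 0 ↔ ∃ a : (A : Type), f.hom a = b)
      (hA : MemC G π A) (hC : MemC G π C) : MemC G π B


/-! ### Abelian group preliminaries -/

/-- `A` is finitely generated up to multiplication by elements of `S`. -/
def SFin (S : Submonoid ℕ) (A : Type*) [AddCommGroup A] : Prop :=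
  ∃ F : AddSubgroup A, F.FG ∧ ∀ a : A, ∃ m ∈ S, m • a ∈ F

/-- The natural numbers coprime to `p`. -/
def copS (p : ℕ) : Submonoid ℕ where
  carrier := {m | m.Coprime p}
  one_mem' := Nat.coprime_one_left p
  mul_mem' := fun ha hb => Nat.Coprime.mul_left ha hb

lemma exists_rat_hom {A : Type*} [AddCommGroup A]
    (tf : ∀ a : A, a ≠ 0 → ¬IsOfFinAddOrder a) (a0 : A) (h0 : a0 ≠ 0) :
    ∃ ψ : A →+ ℚ, ψ a0 = 1 := by
  have hinj : Function.Injective (LinearMap.toSpanSingleton ℤ A a0) := by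
    rw [← LinearMap.ker_eq_bot, LinearMap.ker_eq_bot']
    intro m hm
    by_contra hne
    apply tf a0 h0
    rw [isOfFinAddOrder_iff_zsmul_eq_zero]
    exact ⟨m, hne, by simpa using hm⟩
  obtain ⟨h, hh⟩ := Module.Baer.extension_property (Module.Baer.of_divisible ℚ)
    (LinearMap.toSpanSingleton ℤ A a0) hinj (LinearMap.toSpanSingleton ℤ ℚ 1)
  refine ⟨h.toAddMonoidHom, ?_⟩
  have := LinearMap.congr_fun hh 1
  simpa using this

lemma sfin_of_bound (S : Submonoid ℕ) {A : Type*} [AddCommGroup A]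
    (tf : ∀ a : A, a ≠ 0 → ¬IsOfFinAddOrder a)
    (H : ∀ (K : AddSubgroup A) (ψ : K →+ ℚ) (a0 : K), ψ a0 = 1 →
      ∃ a1 : K, ∀ a : K, ∃ m ∈ S, ∃ k : ℤ, ψ (m • a) = ψ (k • a1)) :
    ∀ (n : ℕ) (K : AddSubgroup A),
      (∀ k : ℕ, (∃ f : (Fin k →₀ ℤ) →+ K, Function.Injective f) → k ≤ n) →
      ∃ F : AddSubgroup A, F.FG ∧ ∀ a ∈ K, ∃ m ∈ S, m • a ∈ F := by
  intro n
  induction n with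
  | zero =>
    intro K hK
    refine ⟨⊥, ⟨∅, by simp⟩, fun a ha => ⟨1, S.one_mem, ?_⟩⟩
    by_contra hne
    have hne : a ≠ 0 := by simpa using hne
    have := hK 1 ⟨(zmultiplesHom K ⟨a, ha⟩).comp (Finsupp.applyAddHom 0), ?_⟩
    · omega
    · rw [injective_iff_map_eq_zero]
      intro v hv
      have h1 : v 0 • a = 0 := by simpa using congrArg Subtype.val hv
      have h2 : v 0 = 0 := by
        by_contra h3
        exact tf a hne (isOfFinAddOrder_iff_zsmul_eq_zero.2 ⟨_, h3, h1⟩)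
      refine Finsupp.ext fun i => ?_
      rw [Subsingleton.elim i 0, h2]; rfl
  | succ n ih =>
    intro K hK
    by_cases hbot : ∀ a ∈ K, a = 0
    · refine ⟨⊥, ⟨∅, by simp⟩, fun a ha => ⟨1, S.one_mem, ?_⟩⟩
      simpa using hbot a ha
    push Not at hbot
    obtain ⟨a0, ha0, hne⟩ := hbot
    have tfK : ∀ a : K, a ≠ 0 → ¬IsOfFinAddOrder a := by
      intro a ha hf
      apply tf a.1 (by simpa using ha)
      exact K.subtype.isOfFinAddOrder hf
    obtain ⟨ψ, hψ⟩ := exists_rat_hom tfK ⟨a0, ha0⟩ (by simpa using hne)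
    obtain ⟨a1, ha1⟩ := H K ψ _ hψ
    obtain ⟨F, hF, hF'⟩ := ih (ψ.ker.map K.subtype) (by
      rintro k ⟨f, hf⟩
      have hmem : ∀ x : ψ.ker.map K.subtype, ∃ hx : x.1 ∈ K, ψ ⟨x.1, hx⟩ = 0 := by
        rintro ⟨x, y, hy, rfl⟩
        exact ⟨y.2, hy⟩
      let ι : ψ.ker.map K.subtype →+ K := AddSubgroup.inclusion (by
        intro x hx; exact (hmem ⟨x, hx⟩).1)
      have hι : ∀ x, ψ (ι x) = 0 := fun x => (hmem x).2
      have hιinj : Function.Injective ι := AddSubgroup.inclusion_injective _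
      let g : (Fin (k + 1) →₀ ℤ) →+ K :=
        (zmultiplesHom K ⟨a0, ha0⟩).comp (Finsupp.applyAddHom 0) +
          (ι.comp f).comp (Finsupp.comapDomain.addMonoidHom (Fin.succ_injective k))
      have hg : ∀ v, g v = v 0 • (⟨a0, ha0⟩ : K) +
        ι (f (Finsupp.comapDomain Fin.succ v (Fin.succ_injective k).injOn)) := fun v => rfl
      have := hK (k + 1) ⟨g, ?_⟩
      · omega
      · rw [injective_iff_map_eq_zero]
        intro v hv
        rw [hg] at hv
        have h0 : v 0 = 0 := by
          have := congrArg ψ hv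
          rw [map_add, hι, map_zsmul, hψ] at this
          simpa using this
        rw [h0, zero_smul, zero_add] at hv
        have h1 := (injective_iff_map_eq_zero _).1 hf _
          ((injective_iff_map_eq_zero _).1 hιinj _ hv)
        ext i
        refine Fin.cases h0 (fun j => ?_) i
        exact DFunLike.congr_fun h1 j)
    refine ⟨F ⊔ AddSubgroup.zmultiples a1.1, ?_, ?_⟩
    · exact hF.sup ⟨{a1.1}, by simp [AddSubgroup.zmultiples_eq_closure]⟩
    · intro a ha
      obtain ⟨m, hm, k, hk⟩ := ha1 ⟨a, ha⟩
      obtain ⟨m', hm', hmem⟩ := hF' (m • a - k • a1.1) (by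
        refine ⟨m • ⟨a, ha⟩ - k • a1, ?_, by simp⟩
        change ψ _ = 0
        rw [map_sub, hk, sub_self])
      refine ⟨m' * m, S.mul_mem hm' hm, ?_⟩
      have : (m' * m) • a = m' • (m • a - k • a1.1) + m' • k • a1.1 := by
        rw [smul_sub, mul_smul]; abel
      rw [this]
      refine add_mem (AddSubgroup.mem_sup_left hmem) (AddSubgroup.mem_sup_right ?_)
      exact nsmul_mem (zsmul_mem (AddSubgroup.mem_zmultiples _) _) _

/-- Transfer of quasicyclic sections: any map to `ℚ/ℤ` hitting the Prüfer group. -/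
lemma hasQuasi_of_map {A : Type*} [AddCommGroup A] (p : ℕ) (K : AddSubgroup A)
    (φ : K →+ RatCircle) (hφ : ∀ x ∈ pruferSubgroup p, ∃ a, φ a = x) :
    HasQuasicyclicSection (Multiplicative A) p := by
  let H0 : AddSubgroup A := ((pruferSubgroup p).comap φ).map K.subtype
  have hmem : ∀ x : H0, ∃ hx : x.1 ∈ K, φ ⟨x.1, hx⟩ ∈ pruferSubgroup p := by
    rintro ⟨x, y, hy, rfl⟩
    exact ⟨y.2, hy⟩
  let φ0 : H0 →+ pruferSubgroup p :=
    { toFun := fun x => ⟨φ ⟨x.1, (hmem x).1⟩, (hmem x).2⟩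
      map_zero' := Subtype.ext (map_zero φ)
      map_add' := fun x y => Subtype.ext
        (map_add φ ⟨x.1, (hmem x).1⟩ ⟨y.1, (hmem y).1⟩) }
  let H : Subgroup (Multiplicative A) := AddSubgroup.toSubgroup H0
  let Φ : H →* Multiplicative (pruferSubgroup p) :=
    { toFun := fun x => Multiplicative.ofAdd (φ0 ⟨x.1.toAdd, x.2⟩)
      map_one' := map_zero φ0
      map_mul' := fun x y => map_add φ0 ⟨x.1.toAdd, x.2⟩ ⟨y.1.toAdd, y.2⟩ }
  have hs : Function.Surjective Φ := by
    intro y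
    obtain ⟨a, ha⟩ := hφ (Multiplicative.toAdd y).1 (Multiplicative.toAdd y).2
    refine ⟨⟨Multiplicative.ofAdd a.1, ⟨a, ?_, rfl⟩⟩, ?_⟩
    · change φ a ∈ pruferSubgroup p
      rw [ha]; exact SetLike.coe_mem (Multiplicative.toAdd y)
    · exact Subtype.ext ha
  exact ⟨H, Φ.ker, inferInstance, ⟨QuotientGroup.quotientKerEquivOfSurjective Φ hs⟩⟩

lemma map_of_hasQuasi {A : Type*} [AddCommGroup A] (p : ℕ)
    (h : HasQuasicyclicSection (Multiplicative A) p) :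
    ∃ (K : AddSubgroup A) (φ : K →+ pruferSubgroup p), Function.Surjective φ := by
  obtain ⟨H, N, hN, ⟨e⟩⟩ := h
  let K : AddSubgroup A := Subgroup.toAddSubgroup' H
  let Φ : H →* Multiplicative (pruferSubgroup p) := e.toMonoidHom.comp (QuotientGroup.mk' N)
  have hs : Function.Surjective Φ := e.surjective.comp (QuotientGroup.mk'_surjective N)
  refine ⟨K, { toFun := fun x => (Φ ⟨Multiplicative.ofAdd x.1, x.2⟩).toAdd
               map_zero' := map_one Φ
               map_add' := fun x y => map_mul Φ ⟨Multiplicative.ofAdd x.1, x.2⟩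
                  ⟨Multiplicative.ofAdd y.1, y.2⟩ }, ?_⟩
  intro y
  obtain ⟨a, ha⟩ := hs (Multiplicative.ofAdd y)
  exact ⟨⟨a.1.toAdd, a.2⟩, ha⟩

lemma rat_coprime {p : ℕ} (hp : p.Prime) {K : Type*} [AddCommGroup K] (ψ : K →+ ℚ)
    (a0 : K) (h0 : ψ a0 = 1) (h : ¬ ∀ n : ℕ, ∃ a, ψ a = 1 / (p : ℚ) ^ n) :
    ∃ a1 : K, ∀ a : K, ∃ m ∈ copS p, ∃ k : ℤ, ψ (m • a) = ψ (k • a1) := by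
  classical
  push Not at h
  have hp0 : (p : ℚ) ≠ 0 := by exact_mod_cast hp.ne_zero
  let n := Nat.find h
  have hn : ∀ a, ψ a ≠ 1 / (p : ℚ) ^ n := Nat.find_spec h
  have hn0 : n ≠ 0 := by
    intro h
    apply hn a0
    rw [h, h0]; simp
  obtain ⟨l, hl⟩ := Nat.exists_eq_succ_of_ne_zero hn0
  have h1 : ∃ a, ψ a = 1 / (p : ℚ) ^ l := by
    have := Nat.find_min h (m := l) (by change l < n; omega)
    push Not at this
    exact this
  obtain ⟨a1, ha1⟩ := h1
  refine ⟨a1, fun a => ?_⟩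
  obtain ⟨j, v, hv, hden⟩ := Nat.exists_eq_pow_mul_and_not_dvd (ψ a).den_nz p hp.ne_one
  have hvp : v.Coprime p := ((Nat.Prime.coprime_iff_not_dvd hp).2 hv).symm
  have hv0 : (v : ℚ) ≠ 0 := by
    have : v ≠ 0 := by rintro rfl; simp at hv
    exact_mod_cast this
  have hva : (v : ℚ) * ψ a = (ψ a).num / (p : ℚ) ^ j := by
    conv_lhs => rw [← Rat.num_div_den (ψ a), hden]
    push_cast
    field_simp
  have hj : j ≤ l := by
    by_contra hlt
    have hcop : IsCoprime (ψ a).num ((p ^ j : ℕ) : ℤ) := by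
      rw [Int.isCoprime_iff_gcd_eq_one]
      have := (ψ a).reduced
      rw [hden] at this
      exact this.coprime_mul_right_right
    obtain ⟨s, t, hst⟩ := hcop
    have hst' : (s : ℚ) * (ψ a).num + t * (p : ℚ) ^ j = 1 := by exact_mod_cast hst
    apply hn (p ^ (j - n) • (s • v • a + t • a0))
    have hjn : (p : ℚ) ^ j = (p : ℚ) ^ (j - n) * (p : ℚ) ^ n := by
      rw [← pow_add]; congr 1; omega
    simp only [map_nsmul, map_add, map_zsmul, h0, nsmul_eq_mul, zsmul_eq_mul, hva]
    have : (s : ℚ) * ((ψ a).num / (p : ℚ) ^ j) + t * 1 = 1 / (p : ℚ) ^ j := by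
      field_simp; linarith
    rw [this, hjn]
    push_cast
    field_simp
  refine ⟨v, hvp, (ψ a).num * (p : ℤ) ^ (l - j), ?_⟩
  have hlj : (p : ℚ) ^ l = (p : ℚ) ^ (l - j) * (p : ℚ) ^ j := by
    rw [← pow_add]; congr 1; omega
  simp only [map_nsmul, map_zsmul, nsmul_eq_mul, zsmul_eq_mul, hva, ha1, hlj]
  push_cast
  field_simp

lemma prufer_hit {p : ℕ} (hp : p.Prime) {K : Type*} [AddCommGroup K] (ψ : K →+ ℚ)
    (h : ∀ n : ℕ, ∃ a, ψ a = 1 / (p : ℚ) ^ n) (x : RatCircle) (hx : x ∈ pruferSubgroup p) :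
    ∃ a, ((QuotientAddGroup.mk' (AddSubgroup.zmultiples (1 : ℚ))).comp ψ) a = x := by
  obtain ⟨q, rfl⟩ := QuotientAddGroup.mk'_surjective _ x
  obtain ⟨n, hn⟩ := hx
  have hp0 : (p : ℚ) ≠ 0 := by exact_mod_cast hp.ne_zero
  rw [← map_nsmul, QuotientAddGroup.mk'_apply, QuotientAddGroup.eq_zero_iff] at hn
  obtain ⟨k, hk⟩ := AddSubgroup.mem_zmultiples_iff.1 hn
  obtain ⟨a, ha⟩ := h n
  refine ⟨k • a, ?_⟩
  rw [AddMonoidHom.comp_apply, map_zsmul, ha]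
  congr 1
  simp only [nsmul_eq_mul, zsmul_eq_mul, mul_one] at hk ⊢
  rw [hk]; push_cast; field_simp

/-- Convenient reformulation of niceness. -/
structure NiceAb (π : Set ℕ) (A : Type*) [AddCommGroup A] : Prop where
  tf : ∀ a : A, a ≠ 0 → ¬IsOfFinAddOrder a
  rk : SFin (nonZeroDivisors ℕ) A
  loc : ∀ p : ℕ, p.Prime → p ∉ π → SFin (copS p) A

lemma NiceAb.of_def {π : Set ℕ} {A : Type*} [AddCommGroup A]
    (tf : ∀ a : A, a ≠ 0 → ¬IsOfFinAddOrder a) (fr : FiniteRankAbelian A)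
    (sp : addSpectrum A ⊆ π) : NiceAb π A := by
  obtain ⟨⟨n, hn⟩, -⟩ := fr
  have key : ∀ S : Submonoid ℕ, (∀ (K : AddSubgroup A) (ψ : K →+ ℚ) (a0 : K), ψ a0 = 1 →
      ∃ a1 : K, ∀ a : K, ∃ m ∈ S, ∃ k : ℤ, ψ (m • a) = ψ (k • a1)) → SFin S A := by
    intro S H
    obtain ⟨F, hF, h⟩ := sfin_of_bound S tf H n ⊤ (by
      rintro k ⟨f, hf⟩
      exact hn k ⟨(⊤ : AddSubgroup A).subtype.comp f, Subtype.val_injective.comp hf⟩)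
    exact ⟨F, hF, fun a => h a trivial⟩
  refine ⟨tf, key _ ?_, fun p hp hpπ => key _ ?_⟩
  · intro K ψ a0 h0
    refine ⟨a0, fun a => ⟨(ψ a).den, ?_, (ψ a).num, ?_⟩⟩
    · simp
    · simp [h0, Rat.den_mul_eq_num]
  · intro K ψ a0 h0
    refine rat_coprime hp ψ a0 h0 fun hall => hpπ (sp ⟨hp, ?_⟩)
    exact hasQuasi_of_map p K _ (prufer_hit hp ψ hall)

lemma fg_iff_int_sub {A : Type*} [AddCommGroup A] {F : AddSubgroup A} :
    F.FG ↔ (AddSubgroup.toIntSubmodule F).FG := by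
  rw [Submodule.fg_iff_addSubgroup_fg, AddSubgroup.toIntSubmodule_toAddSubgroup]

lemma SFin.sub {S : Submonoid ℕ} {A B : Type*} [AddCommGroup A] [AddCommGroup B]
    (f : A →+ B) (hf : Function.Injective f) (h : SFin S B) : SFin S A := by
  obtain ⟨F, hF, h⟩ := h
  refine ⟨F.comap f, ?_, fun a => ?_⟩
  · have : Module.Finite ℤ (AddSubgroup.toIntSubmodule F) :=
      Module.Finite.iff_fg.2 ((fg_iff_int_sub).1 hF)
    rw [fg_iff_int_sub]
    have : Module.Finite ℤ (AddSubgroup.toIntSubmodule (F.comap f)) := by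
      refine Module.Finite.of_injective (N := AddSubgroup.toIntSubmodule F)
        (f.toIntLinearMap.restrict (fun x hx => hx)) ?_
      intro x y hxy
      exact Subtype.ext (hf (congrArg Subtype.val hxy))
    exact Module.Finite.iff_fg.1 this
  · obtain ⟨m, hm, hma⟩ := h (f a)
    exact ⟨m, hm, by simpa using hma⟩

lemma SFin.of_fg {S : Submonoid ℕ} {A : Type*} [AddCommGroup A] {i : Module ℤ A}
    (_ : Module.Finite ℤ A) : SFin S A := by
  obtain rfl : i = AddCommGroup.toIntModule A := Subsingleton.elim _ _
  exact ⟨⊤, AddGroup.fg_def.1 (Module.Finite.iff_addGroup_fg.1 inferInstance),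
    fun _ => ⟨1, S.one_mem, trivial⟩⟩

lemma NiceAb.sub {π : Set ℕ} {A B : Type*} [AddCommGroup A] [AddCommGroup B]
    (f : A →+ B) (hf : Function.Injective f) (h : NiceAb π B) : NiceAb π A :=
  ⟨fun a ha hfin => h.tf (f a) (by rwa [Ne, map_eq_zero_iff f hf]) (f.isOfFinAddOrder hfin),
    h.rk.sub f hf, fun p hp hpπ => (h.loc p hp hpπ).sub f hf⟩

lemma NiceAb.finiteRank {π : Set ℕ} {A : Type*} [AddCommGroup A] (h : NiceAb π A) :
    FiniteRankAbelian A := by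
  refine ⟨?_, fun p hp => ?_⟩
  · obtain ⟨F, hF, hF'⟩ := h.rk
    have : Module.Finite ℤ (AddSubgroup.toIntSubmodule F) :=
      Module.Finite.iff_fg.2 ((fg_iff_int_sub).1 hF)
    refine ⟨Module.finrank ℤ (AddSubgroup.toIntSubmodule F), ?_⟩
    rintro k ⟨f, hf⟩
    choose m hm hmF using fun i : Fin k => hF' (f (Finsupp.single i 1))
    have hM : (∏ i, m i) ≠ 0 := by
      rw [Finset.prod_ne_zero_iff]
      intro i _
      exact nonZeroDivisors.ne_zero (hm i)
    have hall : ∀ v, (∏ i, m i) • f v ∈ F := by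
      intro v
      induction v using Finsupp.induction_linear with
      | zero => simp
      | add a b ha hb => rw [map_add, smul_add]; exact add_mem ha hb
      | single i c =>
        have : Finsupp.single i c = c • Finsupp.single i (1 : ℤ) := by simp
        rw [this, map_zsmul, smul_comm]
        refine zsmul_mem ?_ _
        obtain ⟨t, ht⟩ := Finset.dvd_prod_of_mem m (Finset.mem_univ i)
        rw [ht, mul_comm, mul_smul]
        exact nsmul_mem (hmF i) _
    let g : (Fin k →₀ ℤ) →ₗ[ℤ] AddSubgroup.toIntSubmodule F :=
      LinearMap.codRestrict _ ((∏ i, m i) • f.toIntLinearMap) hall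
    have hg : Function.Injective g := by
      rw [injective_iff_map_eq_zero]
      intro v hv
      have h1 : (∏ i, m i) • f v = 0 := congrArg Subtype.val hv
      rw [← map_nsmul] at h1
      have h2 := (injective_iff_map_eq_zero _).1 hf _ h1
      exact (smul_eq_zero.1 h2).resolve_left hM
    simpa using LinearMap.finrank_le_finrank_of_injective hg
  · refine (Set.finite_singleton (0 : A)).subset ?_
    intro a ha
    by_contra hne
    exact h.tf a hne (isOfFinAddOrder_iff_nsmul_eq_zero.2 ⟨p, hp.pos, ha⟩)

lemma NiceAb.spectrum {π : Set ℕ} {A : Type*} [AddCommGroup A] (h : NiceAb π A) :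
    addSpectrum A ⊆ π := by
  rintro p ⟨hp, hq⟩
  by_contra hpπ
  obtain ⟨K, φ, hφ⟩ := map_of_hasQuasi p hq
  obtain ⟨F, hF, hF'⟩ := (h.loc p hp hpπ).sub K.subtype Subtype.val_injective
  obtain ⟨s, rfl⟩ := hF
  -- a uniform exponent for the image of `F`
  have hex : ∀ x : K, ∃ n : ℕ, p ^ n • φ x = 0 := by
    intro x
    obtain ⟨n, hn⟩ := (φ x).2
    exact ⟨n, Subtype.ext hn⟩
  choose e he using hex
  have hall : ∀ x ∈ AddSubgroup.closure (s : Set K), p ^ (∑ i ∈ s, e i) • φ x = 0 := by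
    intro x hx
    induction hx using AddSubgroup.closure_induction with
    | mem x hx =>
      obtain ⟨t, ht⟩ := pow_dvd_pow p (Finset.single_le_sum (f := e) (fun _ _ => Nat.zero_le _)
        (Finset.mem_coe.1 hx))
      rw [ht, mul_comm, mul_smul, he, smul_zero]
    | zero => simp
    | add x y _ _ hx hy => rw [map_add, smul_add, hx, hy, add_zero]
    | neg x _ hx => rw [map_neg, smul_neg, hx, neg_zero]
  set N := ∑ i ∈ s, e i
  have hp0 : (p : ℚ) ≠ 0 := by exact_mod_cast hp.ne_zero
  let q : RatCircle := QuotientAddGroup.mk' _ (1 / (p : ℚ) ^ (N + 1))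
  have hq1 : p ^ (N + 1) • q = 0 := by
    rw [← map_nsmul, QuotientAddGroup.mk'_apply, QuotientAddGroup.eq_zero_iff,
      AddSubgroup.mem_zmultiples_iff]
    refine ⟨1, ?_⟩
    simp only [nsmul_eq_mul]; push_cast; field_simp; simp
  have hq2 : p ^ N • q ≠ 0 := by
    rw [← map_nsmul, QuotientAddGroup.mk'_apply, Ne, QuotientAddGroup.eq_zero_iff,
      AddSubgroup.mem_zmultiples_iff]
    rintro ⟨k, hk⟩
    simp only [nsmul_eq_mul, zsmul_eq_mul] at hk
    push_cast at hk
    rw [pow_succ] at hk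
    field_simp at hk
    have : (p : ℤ) * k = 1 := by exact_mod_cast (by linarith : (p : ℚ) * k = 1)
    have h3 : (p : ℤ) ∣ 1 := ⟨k, this.symm⟩
    have := Int.natCast_dvd_natCast.1 (by simpa using h3 : (p : ℤ) ∣ ((1 : ℕ) : ℤ))
    exact hp.one_lt.ne' (Nat.dvd_one.1 this)
  obtain ⟨x, hx⟩ := hφ ⟨q, N + 1, hq1⟩
  obtain ⟨m, hm, hmx⟩ := hF' x
  have h4 := congrArg Subtype.val (hall _ hmx)
  rw [map_nsmul, hx] at h4
  have h4 : p ^ N • m • q = 0 := h4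
  apply hq2
  rw [smul_comm] at h4
  have hmp : IsCoprime (m : ℤ) (p : ℤ) := Nat.isCoprime_iff_coprime.2 hm
  obtain ⟨u, v, huv⟩ := hmp
  calc p ^ N • q = (1 : ℤ) • p ^ N • q := (one_smul _ _).symm
    _ = u • m • p ^ N • q + v • p ^ (N + 1) • q := by
      rw [← huv, add_smul, mul_smul, mul_smul, natCast_zsmul, natCast_zsmul, pow_succ', mul_smul]
    _ = 0 := by rw [h4, hq1, smul_zero, smul_zero, add_zero]

lemma SFin.tensor {S : Submonoid ℕ} {A B : Type*} [AddCommGroup A] [AddCommGroup B]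
    [Module ℤ A] [Module ℤ B]
    (hA : SFin S A) (hB : SFin S B) : SFin S (TensorProduct ℤ A B) := by
  obtain ⟨F, ⟨s, rfl⟩, hF⟩ := hA
  obtain ⟨E, ⟨t, rfl⟩, hE⟩ := hB
  classical
  let T : Finset (TensorProduct ℤ A B) := Finset.image₂ (fun a b => TensorProduct.tmul ℤ a b) s t
  have hmem : ∀ a ∈ AddSubgroup.closure (s : Set A), ∀ b ∈ AddSubgroup.closure (t : Set B),
      TensorProduct.tmul ℤ a b ∈ AddSubgroup.closure (T : Set (TensorProduct ℤ A B)) := by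
    intro a ha b hb
    induction ha using AddSubgroup.closure_induction with
    | mem x hx =>
      induction hb using AddSubgroup.closure_induction with
      | mem y hy =>
        exact AddSubgroup.subset_closure
          (Finset.mem_coe.2 (Finset.mem_image₂_of_mem (Finset.mem_coe.1 hx) (Finset.mem_coe.1 hy)))
      | zero => simp
      | add x y _ _ hx hy => rw [TensorProduct.tmul_add]; exact add_mem hx hy
      | neg x _ hx => rw [TensorProduct.tmul_neg]; exact neg_mem hx
    | zero => simp
    | add x y _ _ hx hy => rw [TensorProduct.add_tmul]; exact add_mem hx hy
    | neg x _ hx => rw [TensorProduct.neg_tmul]; exact neg_mem hx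
  refine ⟨AddSubgroup.closure T, ⟨T, rfl⟩, fun x => ?_⟩
  induction x using TensorProduct.induction_on with
  | zero => exact ⟨1, S.one_mem, by simp⟩
  | tmul a b =>
    obtain ⟨m, hm, hma⟩ := hF a
    obtain ⟨n, hn, hnb⟩ := hE b
    refine ⟨m * n, S.mul_mem hm hn, ?_⟩
    have : (m * n) • TensorProduct.tmul ℤ a b = TensorProduct.tmul ℤ (m • a) (n • b) := by
      rw [TensorProduct.smul_tmul', mul_smul, smul_comm m n, TensorProduct.smul_tmul]
    rw [this]
    exact hmem _ hma _ hnb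
  | add x y hx hy =>
    obtain ⟨m, hm, hma⟩ := hx
    obtain ⟨n, hn, hnb⟩ := hy
    refine ⟨m * n, S.mul_mem hm hn, ?_⟩
    rw [smul_add]
    refine add_mem ?_ ?_
    · rw [mul_comm, mul_smul]; exact nsmul_mem hma _
    · rw [mul_smul]; exact nsmul_mem hnb _

lemma flat_of_tf {A : Type*} [AddCommGroup A] [i : Module ℤ A]
    (tf : ∀ a : A, a ≠ 0 → ¬IsOfFinAddOrder a) : Module.Flat ℤ A := by
  obtain rfl : i = AddCommGroup.toIntModule A := Subsingleton.elim _ _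
  have : Module.IsTorsionFree ℤ A := by
    refine Module.IsTorsionFree.mk fun n hn => ?_
    have hn0 : n ≠ 0 := hn.ne_zero
    intro a b hab
    by_contra hne
    refine tf (a - b) (sub_ne_zero.2 hne) (isOfFinAddOrder_iff_zsmul_eq_zero.2 ⟨n, hn0, ?_⟩)
    rw [smul_sub]; exact sub_eq_zero.2 hab
  infer_instance

lemma tf_of_flat {A : Type*} [AddCommGroup A] {i : Module ℤ A} (_ : Module.Flat ℤ A) :
    ∀ a : A, a ≠ 0 → ¬IsOfFinAddOrder a := by
  obtain rfl : i = AddCommGroup.toIntModule A := Subsingleton.elim _ _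
  intro a ha h
  obtain ⟨n, hn, h⟩ := isOfFinAddOrder_iff_zsmul_eq_zero.1 h
  exact ha ((smul_eq_zero.1 h).resolve_left hn)

lemma flat_tensor {R A B : Type*} [CommRing R] [AddCommGroup A] [AddCommGroup B]
    [Module R A] [Module R B] [Module.Flat R A] [Module.Flat R B] :
    Module.Flat R (TensorProduct R A B) := inferInstance

lemma NiceAb.tensor {π : Set ℕ} {A B : Type*} [AddCommGroup A] [AddCommGroup B]
    [Module ℤ A] [Module ℤ B]
    (hA : NiceAb π A) (hB : NiceAb π B) : NiceAb π (TensorProduct ℤ A B) := by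
  have := flat_of_tf hA.tf
  have := flat_of_tf hB.tf
  exact ⟨tf_of_flat (flat_tensor (R := ℤ) (A := A) (B := B)), hA.rk.tensor hB.rk, fun p hp hpπ => (hA.loc p hp hpπ).tensor (hB.loc p hp hpπ)⟩

lemma niceRep_iff {G : Type} [Group G] {π : Set ℕ} (M : Rep.{0} ℤ G) :
    NiceRep π M ↔ NiceAb π M :=
  ⟨fun h => .of_def h.1 h.2.1 h.2.2, fun h => ⟨h.tf, h.finiteRank, h.spectrum⟩⟩

/-! ### Elementary constructions in `Rep k G` -/

section repk

variable {k : Type} [CommRing k] {G : Type} [Group G]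

/-- kernel as a representation -/
def kerRep {A B : Rep.{0} k G} (f : A ⟶ B) : Rep.{0} k G :=
  A.subrepresentation (LinearMap.ker f.hom.toLinearMap) (by
    intro g x hx
    have h : f.hom x = 0 := hx
    change f.hom (A.ρ g x) = 0
    rw [Rep.hom_comm_apply, h, map_zero])

/-- kernel inclusion -/
def kerι {A B : Rep.{0} k G} (f : A ⟶ B) : kerRep f ⟶ A :=
  Rep.subtype A _ _

lemma kerι_inj {A B : Rep.{0} k G} (f : A ⟶ B) : Function.Injective (kerι f).hom :=
  Subtype.val_injective

lemma kerι_exact {A B : Rep.{0} k G} (f : A ⟶ B) (b : A) :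
    f.hom b = 0 ↔ ∃ a : kerRep f, (kerι f).hom a = b :=
  ⟨fun h => ⟨⟨b, h⟩, rfl⟩, by rintro ⟨a, rfl⟩; exact a.2⟩

/-- preimage of a subrepresentation (given as an injective map) -/
lemma exists_pullback {A B C : Rep.{0} k G} (f : A ⟶ C) (i : B ⟶ C)
    (hi : Function.Injective i.hom) :
    ∃ (P : Rep.{0} k G) (j : P ⟶ A) (q : P ⟶ B), Function.Injective j.hom ∧
      (∀ x, f.hom (j.hom x) = i.hom (q.hom x)) ∧
      (∀ a b, f.hom a = i.hom b → ∃ x, j.hom x = a ∧ q.hom x = b) := by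
  let W : Submodule k A := (LinearMap.range i.hom.toLinearMap).comap f.hom.toLinearMap
  have hW : ∀ g, W ≤ W.comap (A.ρ g) := by
    rintro g x ⟨b, hb⟩
    have hb : i.hom b = f.hom x := hb
    exact ⟨B.ρ g b, by
      change i.hom (B.ρ g b) = f.hom (A.ρ g x)
      rw [Rep.hom_comm_apply, Rep.hom_comm_apply, hb]⟩
  have hch : ∀ x : W, ∃ b, i.hom b = f.hom x.1 := fun x => x.2
  choose c hc using hch
  let P := A.subrepresentation W hW
  let j : P ⟶ A := Rep.subtype A W hW
  let q : P ⟶ B := Rep.ofHom (ρ := P.ρ) (σ := B.ρ)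
    { toFun := fun x => c x
      map_add' := fun x y => hi (by
        rw [map_add, hc, hc, hc, ← map_add]; rfl)
      map_smul' := fun n x => hi (by
        change i.hom.toLinearMap _ = i.hom.toLinearMap _
        rw [map_smul]
        change i.hom _ = _ • i.hom _
        rw [hc, hc]
        change f.hom.toLinearMap _ = _ • f.hom.toLinearMap _
        rw [RingHom.id_apply, ← map_smul]; rfl)
      isIntertwining' := fun g => by
        ext x
        apply hi
        change i.hom (c (P.ρ g x)) = i.hom (B.ρ g (c x))
        rw [hc, Rep.hom_comm_apply, hc, ← Rep.hom_comm_apply]; rfl }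
  refine ⟨P, j, q, Subtype.val_injective, fun x => (hc x).symm, fun a b hab => ?_⟩
  refine ⟨⟨a, b, hab.symm⟩, rfl, hi ?_⟩
  exact (hc _).trans hab

/-- image of a morphism -/
lemma exists_image {A B : Rep.{0} k G} (f : A ⟶ B) :
    ∃ (Q : Rep.{0} k G) (p : A ⟶ Q) (ι : Q ⟶ B), Function.Surjective p.hom ∧
      Function.Injective ι.hom ∧ ∀ a, ι.hom (p.hom a) = f.hom a := by
  let W : Submodule k B := LinearMap.range f.hom.toLinearMap
  have hW : ∀ g, W ≤ W.comap (B.ρ g) := by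
    rintro g _ ⟨a, rfl⟩
    exact ⟨A.ρ g a, by
      change f.hom (A.ρ g a) = B.ρ g (f.hom a)
      rw [Rep.hom_comm_apply]⟩
  let Q := B.subrepresentation W hW
  let ι : Q ⟶ B := Rep.subtype B W hW
  have hι : Function.Injective ι.hom := Subtype.val_injective
  let p : A ⟶ Q := Rep.ofHom (ρ := A.ρ) (σ := Q.ρ)
    { toLinearMap := f.hom.toLinearMap.rangeRestrict
      isIntertwining' := fun g => by
        ext x
        change f.hom (A.ρ g x) = B.ρ g (f.hom x)
        rw [Rep.hom_comm_apply] }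
  exact ⟨Q, p, ι, LinearMap.surjective_rangeRestrict _, hι, fun a => rfl⟩

end repk

/-! ### Closure properties of `MemC` -/

section memC

variable {G : Type} [Group G] {π : Set ℕ}

lemma MemC.sub {B : Rep.{0} ℤ G} (hB : MemC G π B) :
    ∀ {A : Rep.{0} ℤ G} (f : A ⟶ B), Function.Injective f.hom → MemC G π A := by
  induction hB with
  | of_finite B h => intro A f hf; exact .of_finite A (Finite.of_injective _ hf)
  | of_nice B h =>
    intro A f hf
    exact .of_nice A ((niceRep_iff A).2
      (((niceRep_iff B).1 h).sub (AddMonoidHomClass.toAddMonoidHom f.hom) hf))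
  | quot B C q hq _ ih =>
    intro A f hf
    obtain ⟨P, j, r, hj, h1, h2⟩ := exists_pullback q f hf
    refine .quot P A r ?_ (ih j hj)
    intro a
    obtain ⟨b, hb⟩ := hq (f.hom a)
    obtain ⟨x, _, hx⟩ := h2 b a hb
    exact ⟨x, hx⟩
  | ext B' B B'' i q hi hq hex _ _ ih1 ih2 =>
    intro A f hf
    obtain ⟨P, j, r, hj, h1, h2⟩ := exists_pullback f i hi
    obtain ⟨Q, p, ι, hp, hι, hpι⟩ := exists_image (f ≫ q)
    have hr : Function.Injective r.hom := by
      intro x y hxy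
      apply hj; apply hf
      rw [h1, h1, hxy]
    refine .ext P A Q j p hj hp ?_ (ih1 r hr) (ih2 ι hι)
    intro x
    have e1 : p.hom x = 0 ↔ q.hom (f.hom x) = 0 := by
      rw [← map_eq_zero_iff ι.hom hι, hpι]; rfl
    rw [e1, hex]
    constructor
    · rintro ⟨b, hb⟩
      obtain ⟨y, hy, _⟩ := h2 x b hb.symm
      exact ⟨y, hy⟩
    · rintro ⟨z, rfl⟩
      exact ⟨r.hom z, by rw [← h1]⟩

/-- middle term of an exact sequence -/
lemma MemC.mid {A B C : Rep.{0} ℤ G} (f : A ⟶ B) (g : B ⟶ C)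
    (hex : ∀ b : B, g.hom b = 0 ↔ ∃ a : A, f.hom a = b)
    (hA : MemC G π A) (hC : MemC G π C) : MemC G π B := by
  obtain ⟨Q, p, ι, hp, hι, hpι⟩ := exists_image g
  obtain ⟨Q', p', ι', hp', hι', hpι'⟩ := exists_image f
  refine .ext Q' B Q ι' p hι' hp ?_ (.quot A Q' p' hp' hA) (hC.sub ι hι)
  intro b
  rw [← map_eq_zero_iff ι.hom hι, hpι, hex]
  constructor
  · rintro ⟨a, rfl⟩; exact ⟨p'.hom a, hpι' a⟩
  · rintro ⟨a, rfl⟩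
    obtain ⟨a, rfl⟩ := hp' a
    exact ⟨a, (hpι' a).symm⟩

end memC

/-! ### Tensor products and homology in `Rep k G` -/

section homol

open MonoidalCategory

variable {k : Type} [CommRing k] {G : Type} [Group G]

lemma rep_exact_iff (S : ShortComplex (Rep.{0} k G)) :
    S.Exact ↔ ∀ b : S.X₂, S.g.hom b = 0 ↔ ∃ a : S.X₁, S.f.hom a = b := by
  rw [← ShortComplex.exact_map_iff_of_faithful S (forget₂ (Rep.{0} k G) (ModuleCat.{0} k)),
    ShortComplex.moduleCat_exact_iff]
  constructor
  · intro h b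
    refine ⟨fun hb => h b hb, ?_⟩
    rintro ⟨a, rfl⟩
    have := congrArg (fun f => f.hom a) S.zero
    exact this
  · intro h b hb
    exact (h b).1 hb

lemma rep_flat_of_projective (P : Rep.{0} k G) [Projective P] : Module.Flat k P := by
  let q := Rep.freeLift k G (A := P) (fun x : P => x)
  have hq : Function.Surjective q.hom := by
    intro x
    refine ⟨Finsupp.single x (MonoidAlgebra.single 1 1), ?_⟩
    simp [q]
  have : Epi q := (Rep.epi_iff_surjective q).2 hq
  let s := Projective.factorThru (𝟙 P) q
  have hs : s ≫ q = 𝟙 P := Projective.factorThru_comp _ _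
  have hfl : Module.Flat k (Rep.free k G P) := by
    change Module.Flat k (P →₀ MonoidAlgebra k G)
    infer_instance
  refine Module.Flat.of_retract (M := Rep.free k G P) s.hom.toLinearMap q.hom.toLinearMap ?_
  ext x
  exact congrArg (fun f => f.hom x) hs

/-- Elementwise short exactness. -/
structure SES {A B C : Rep.{0} k G} (f : A ⟶ B) (g : B ⟶ C) : Prop where
  inj : Function.Injective f.hom
  surj : Function.Surjective g.hom
  ex : ∀ b : B, g.hom b = 0 ↔ ∃ a : A, f.hom a = b

lemma SES.zero {A B C : Rep.{0} k G} {f : A ⟶ B} {g : B ⟶ C} (h : SES f g) : f ≫ g = 0 := by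
  ext a
  exact (h.ex _).2 ⟨a, rfl⟩

lemma SES.shortExact {A B C : Rep.{0} k G} {f : A ⟶ B} {g : B ⟶ C} (h : SES f g)
    (w : f ≫ g = 0) : (ShortComplex.mk f g w).ShortExact := by
  have : Mono f := (Rep.mono_iff_injective f).2 h.inj
  have : Epi g := (Rep.epi_iff_surjective g).2 h.surj
  exact ShortComplex.ShortExact.mk ((rep_exact_iff _).2 h.ex)

lemma SES.whiskerRight {A B C : Rep.{0} k G} {f : A ⟶ B} {g : B ⟶ C} (h : SES f g)
    (P : Rep.{0} k G) [Module.Flat k P] : SES (f ▷ P) (g ▷ P) := by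
  have hex : Function.Exact f.hom.toLinearMap g.hom.toLinearMap := h.ex
  refine ⟨?_, ?_, ?_⟩
  · exact Module.Flat.rTensor_preserves_injective_linearMap (M := P) f.hom.toLinearMap h.inj
  · exact LinearMap.rTensor_surjective P (g := g.hom.toLinearMap) h.surj
  · exact rTensor_exact P hex h.surj

lemma SES.whiskerLeft {A B C : Rep.{0} k G} {f : A ⟶ B} {g : B ⟶ C} (h : SES f g)
    (P : Rep.{0} k G) [Module.Flat k P] : SES (P ◁ f) (P ◁ g) := by
  have hex : Function.Exact f.hom.toLinearMap g.hom.toLinearMap := h.ex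
  refine ⟨?_, ?_, ?_⟩
  · exact Module.Flat.lTensor_preserves_injective_linearMap (M := P) f.hom.toLinearMap h.inj
  · exact LinearMap.lTensor_surjective P (g := g.hom.toLinearMap) h.surj
  · exact lTensor_exact P hex h.surj

lemma whiskerLeft_exact (P : Rep.{0} k G) [Module.Flat k P] (S : ShortComplex (Rep.{0} k G))
    (h : S.Exact) : (S.map ((tensoringLeft (Rep.{0} k G)).obj P)).Exact := by
  rw [rep_exact_iff] at h ⊢
  have hex : Function.Exact S.f.hom.toLinearMap S.g.hom.toLinearMap := h
  exact Module.Flat.lTensor_exact P hex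

lemma whiskerRight_surj {A B : Rep.{0} k G} (f : A ⟶ B) (h : Function.Surjective f.hom)
    (P : Rep.{0} k G) : Function.Surjective (f ▷ P).hom :=
  LinearMap.rTensor_surjective P (g := f.hom.toLinearMap) h

lemma whiskerLeft_surj {A B : Rep.{0} k G} (f : A ⟶ B) (h : Function.Surjective f.hom)
    (P : Rep.{0} k G) : Function.Surjective (P ◁ f).hom :=
  LinearMap.lTensor_surjective P (g := f.hom.toLinearMap) h

lemma SES.whiskerRight_ex {A B C : Rep.{0} k G} {f : A ⟶ B} {g : B ⟶ C} (h : SES f g)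
    (P : Rep.{0} k G) (b : (B ⊗ P : Rep.{0} k G)) :
    (g ▷ P).hom b = 0 ↔ ∃ a : (A ⊗ P : Rep.{0} k G), (f ▷ P).hom a = b := by
  have hex : Function.Exact f.hom.toLinearMap g.hom.toLinearMap := h.ex
  exact rTensor_exact P hex h.surj b

/-- The tensor product of a representation with a complex. -/
abbrev tensC (A : Rep.{0} k G) (K : ChainComplex (Rep.{0} k G) ℕ) :
    ChainComplex (Rep.{0} k G) ℕ :=
  (((tensoringLeft (Rep.{0} k G)).obj A).mapHomologicalComplex _).obj K

/-- Functoriality of `tensC`. -/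
abbrev tensMap {A B : Rep.{0} k G} (f : A ⟶ B) (K : ChainComplex (Rep.{0} k G) ℕ) :
    tensC A K ⟶ tensC B K :=
  (NatTrans.mapHomologicalComplex ((tensoringLeft (Rep.{0} k G)).map f) _).app K

/-- `Tor` computed by a resolution. -/
def torIso (A : Rep.{0} k G) {B : Rep.{0} k G} (P : ProjectiveResolution B) (n : ℕ) :
    ((Tor (Rep.{0} k G) n).obj A).obj B ≅ (tensC A P.complex).homology n :=
  P.isoLeftDerivedObj ((tensoringLeft (Rep.{0} k G)).obj A) n

/-- `Tor_0` is the tensor product. -/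
def torZeroIso (A B : Rep.{0} k G) :
    ((Tor (Rep.{0} k G) 0).obj A).obj B ≅ A ⊗ B :=
  haveI : Limits.PreservesFiniteColimits ((tensoringLeft (Rep.{0} k G)).obj A) :=
    inferInstanceAs (Limits.PreservesFiniteColimits (tensorLeft A))
  (((tensoringLeft (Rep.{0} k G)).obj A).leftDerivedZeroIsoSelf).app B

lemma tens_shortExact {A B C X : Rep.{0} k G} {f : A ⟶ B} {g : B ⟶ C} (h : SES f g)
    (P : ProjectiveResolution X) :
    ∃ w, (ShortComplex.mk (tensMap f P.complex) (tensMap g P.complex) w).ShortExact := by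
  have w : tensMap f P.complex ≫ tensMap g P.complex = 0 := by
    ext1 i
    have := rep_flat_of_projective (P.complex.X i)
    exact (h.whiskerRight (P.complex.X i)).zero
  refine ⟨w, HomologicalComplex.shortExact_of_degreewise_shortExact _ fun i => ?_⟩
  have := rep_flat_of_projective (P.complex.X i)
  exact (h.whiskerRight (P.complex.X i)).shortExact _

lemma tor_isZero {A : Rep.{0} k G} [Module.Flat k A] (B : Rep.{0} k G) (n : ℕ) :
    Limits.IsZero (((Tor (Rep.{0} k G) (n + 1)).obj A).obj B) := by
  let P := projectiveResolution B
  refine Limits.IsZero.of_iso ?_ (torIso A P (n + 1))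
  have h : (P.complex.sc (n + 1)).Exact := P.complex_exactAt_succ n
  have : (tensC A P.complex).ExactAt (n + 1) :=
    (HomologicalComplex.exactAt_iff _ _).2 (whiskerLeft_exact A (P.complex.sc (n + 1)) h)
  exact this.isZero_homology

end homol

section perm

variable {k : Type} [CommRing k] {G : Type} [Group G]

/-- The permutation module on the underlying set of `A`. -/
def permRep (A : Rep.{0} k G) : Rep.{0} k G :=
  Rep.of (X := A →₀ k)
    { toFun := fun g => Finsupp.lmapDomain k k (A.ρ g)
      map_one' := by ext; simp
      map_mul' := fun g h => by ext; simp }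

/-- The canonical map from the permutation module. -/
def permMap (A : Rep.{0} k G) : permRep A ⟶ A :=
  Rep.ofHom (ρ := (permRep A).ρ) (σ := A.ρ)
    { toLinearMap := Finsupp.linearCombination k (fun x : A => x)
      isIntertwining' := fun g => by
        apply Finsupp.lhom_ext
        intro a b
        change Finsupp.linearCombination k (fun x : A => x)
          (Finsupp.mapDomain (A.ρ g) (Finsupp.single a b)) =
          A.ρ g (Finsupp.linearCombination k (fun x : A => x) (Finsupp.single a b))
        simp }

lemma permMap_surj (A : Rep.{0} k G) : Function.Surjective (permMap A).hom := by
  intro x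
  refine ⟨Finsupp.single x 1, ?_⟩
  change Finsupp.linearCombination k (fun x : A => x) (Finsupp.single x 1) = x
  simp

lemma permRep_flat (A : Rep.{0} k G) : Module.Flat k (permRep A) := by
  change Module.Flat k (A →₀ k)
  infer_instance

lemma permRep_finite (A : Rep.{0} k G) [Finite A] : Module.Finite k (permRep A) := by
  change Module.Finite k (A →₀ k)
  infer_instance

end perm

section main

open MonoidalCategory

variable {G : Type} [Group G] {π : Set ℕ}

lemma MemC.iso {A B : Rep.{0} ℤ G} (e : A ≅ B) (h : MemC G π A) : MemC G π B :=
  .quot A B e.hom (fun x => ⟨e.inv.hom x, Rep.hom_inv_apply _ _ e x⟩) h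

lemma MemC.exact {S : ShortComplex (Rep.{0} ℤ G)} (h : S.Exact) (h1 : MemC G π S.X₁)
    (h3 : MemC G π S.X₃) : MemC G π S.X₂ :=
  MemC.mid S.f S.g ((rep_exact_iff S).1 h) h1 h3

lemma permRep_nice (A : Rep.{0} ℤ G) [Finite A] : NiceRep π (permRep A) :=
  (niceRep_iff _).2 ⟨tf_of_flat (permRep_flat A), .of_fg (permRep_finite A),
    fun _ _ _ => .of_fg (permRep_finite A)⟩

/-- `𝔠` is the closure of the nice modules under quotients and extensions. -/
lemma MemC.rec_nice {M : Rep.{0} ℤ G → Prop}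
    (nice : ∀ A, NiceRep π A → M A)
    (quot : ∀ (A B : Rep.{0} ℤ G) (f : A ⟶ B), Function.Surjective f.hom →
      MemC G π A → M A → M B)
    (ext : ∀ (A B C : Rep.{0} ℤ G) (f : A ⟶ B) (g : B ⟶ C), SES f g → M A → M C → M B)
    {A : Rep.{0} ℤ G} (hA : MemC G π A) : M A := by
  induction hA with
  | of_finite A h =>
    exact quot _ _ (permMap A) (permMap_surj A) (.of_nice _ (permRep_nice A))
      (nice _ (permRep_nice A))
  | of_nice A h => exact nice A h
  | quot A B f hf hA ih => exact quot A B f hf hA ih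
  | ext A B C f g h1 h2 h3 _ _ ih1 ih2 => exact ext A B C f g ⟨h1, h2, h3⟩ ih1 ih2

lemma nice_tensor {A B : Rep.{0} ℤ G} (hA : NiceRep π A) (hB : MemC G π B) :
    MemC G π (A ⊗ B) := by
  have hfl := flat_of_tf (i := A.hV2) ((niceRep_iff A).1 hA).tf
  refine MemC.rec_nice (M := fun B => MemC G π (A ⊗ B)) ?_ ?_ ?_ hB
  · intro B hB
    exact .of_nice _ ((niceRep_iff _).2
      (@NiceAb.tensor π A B _ _ A.hV2 B.hV2 ((niceRep_iff A).1 hA) ((niceRep_iff B).1 hB)))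
  · intro B C f hf _ hB
    exact .quot _ _ (A ◁ f) (whiskerLeft_surj f hf A) hB
  · intro B C D f g h hB hD
    have h' := h.whiskerLeft A
    exact .ext _ _ _ (A ◁ f) (A ◁ g) h'.inj h'.surj h'.ex hB hD

lemma ses_ker {A B : Rep.{0} ℤ G} (f : A ⟶ B) (hf : Function.Surjective f.hom) :
    SES (kerι f) f := ⟨kerι_inj f, hf, kerι_exact f⟩

theorem memC_tor_aux (n : ℕ) : ∀ A B : Rep.{0} ℤ G, MemC G π A → MemC G π B →
    MemC G π (((Tor (Rep ℤ G) n).obj A).obj B) := by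
  induction n with
  | zero =>
    intro A B hA hB
    refine MemC.iso (torZeroIso A B).symm ?_
    refine MemC.rec_nice (M := fun A => MemC G π (A ⊗ B)) ?_ ?_ ?_ hA
    · intro A hA
      exact nice_tensor hA hB
    · intro A C f hf _ h
      exact .quot _ _ (f ▷ B) (whiskerRight_surj f hf B) h
    · intro A C D f g h h1 h2
      exact MemC.mid (f ▷ B) (g ▷ B) (h.whiskerRight_ex B) h1 h2
  | succ n ih =>
    intro A B hA hB
    let P := projectiveResolution B
    refine MemC.rec_nice (M := fun A => MemC G π (((Tor (Rep ℤ G) (n + 1)).obj A).obj B))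
      ?_ ?_ ?_ hA
    · intro A hA
      have hfl := flat_of_tf (i := A.hV2) ((niceRep_iff A).1 hA).tf
      have hs := (Rep.isZero_iff _ _ _).1 (tor_isZero (A := A) B n)
      exact .of_finite _ (@Finite.of_subsingleton _ hs)
    · intro A C f hf hA h
      obtain ⟨w, hw⟩ := tens_shortExact (ses_ker f hf) P
      refine MemC.iso (torIso C P (n + 1)).symm ?_
      refine MemC.exact (hw.homology_exact₃ (n + 1) n (by simp)) ?_ ?_
      · exact MemC.iso (torIso A P (n + 1)) h
      · exact MemC.iso (torIso (kerRep f) P n) (ih _ _ (hA.sub _ (kerι_inj f)) hB)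
    · intro A C D f g h h1 h2
      obtain ⟨w, hw⟩ := tens_shortExact h P
      refine MemC.iso (torIso C P (n + 1)).symm ?_
      refine MemC.exact (hw.homology_exact₂ (n + 1)) ?_ ?_
      · exact MemC.iso (torIso A P (n + 1)) h1
      · exact MemC.iso (torIso D P (n + 1)) h2

end main

/-- Let `G` be a group and `π` a set of primes.  If `A` and `B` belong to
`𝔠(G, π)`, then `Tor_n^ℤ(A, B)`, with the diagonal `G`-action, belongs to
`𝔠(G, π)` for all `n ≥ 0`. -/
theorem memC_tor (G : Type) [Group G] (π : Set ℕ) (A B : Rep ℤ G)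
    (hA : MemC G π A) (hB : MemC G π B) (n : ℕ) :
    MemC G π (((Tor (Rep ℤ G) n).obj A).obj B) := by
  exact memC_tor_aux n A B hA hB
end
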